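/- For every commutative ring R, every n ≥ 0, and all vectors v, w ∈ R^{n+1}: J_n·S_n(v,w)ᵀ·J_nᵀ = S_n(v,w) if n is even, and J_n·S_n(v,w)ᵀ·J_nᵀ = S̄_n(v,w) if n is odd. -/

import Mathlib

open Matrix

noncomputable section

/-- Reindexing equivalence `Fin (2 ^ n) ⊕ Fin (2 ^ n) ≃ Fin (2 ^ (n + 1))`. -/
def pow2Equiv (n : ℕ) : Fin (2 ^ n) ⊕ Fin (2 ^ n) ≃ Fin (2 ^ (n + 1)) :=
  finSumFinEquiv.trans (finCongr (by rw [pow_succ]; ring))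

/-- The Suslin matrix `S_n(v, w)` of size `2 ^ n` associated to `v, w : Fin (n+1) → R`. -/
def sus (R : Type) [CommRing R] : (n : ℕ) → (Fin (n + 1) → R) → (Fin (n + 1) → R) →
    Matrix (Fin (2 ^ n)) (Fin (2 ^ n)) R
  | 0, v, _ => v 0 • 1
  | n + 1, v, w =>
      Matrix.reindex (pow2Equiv n) (pow2Equiv n)
        (Matrix.fromBlocks (v 0 • 1) (sus R n (v ∘ Fin.succ) (w ∘ Fin.succ))
          (-(sus R n (w ∘ Fin.succ) (v ∘ Fin.succ))ᵀ) (w 0 • 1))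

/-- The conjugate Suslin matrix `S̄_n(v, w) = S_n(w, v)ᵀ`. -/
def susBar (R : Type) [CommRing R] (n : ℕ) (v w : Fin (n + 1) → R) :
    Matrix (Fin (2 ^ n)) (Fin (2 ^ n)) R :=
  (sus R n w v)ᵀ

/-- Suslin's matrices `J_n`. -/
def Jmat (R : Type) [CommRing R] : (n : ℕ) → Matrix (Fin (2 ^ n)) (Fin (2 ^ n)) R
  | 0 => 1
  | n + 1 =>
      if Even (n + 1) then
        Matrix.reindex (pow2Equiv n) (pow2Equiv n)
          (Matrix.fromBlocks (Jmat R n) 0 0 (-(Jmat R n)))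
      else
        Matrix.reindex (pow2Equiv n) (pow2Equiv n)
          (Matrix.fromBlocks 0 (Jmat R n) (-(Jmat R n)) 0)

/-- The involution `M ↦ M* = J_n · Mᵀ · J_nᵀ`. -/
def invol (R : Type) [CommRing R] (n : ℕ) (M : Matrix (Fin (2 ^ n)) (Fin (2 ^ n)) R) :
    Matrix (Fin (2 ^ n)) (Fin (2 ^ n)) R :=
  Jmat R n * Mᵀ * (Jmat R n)ᵀ

/-- `φ(v, w) = [[0, S_n(v,w)], [S̄_n(v,w), 0]]` (note the shift: vectors in `R^{n+1}`,
matrices of size `2 ^ (n + 1)`). -/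
def phiMat (R : Type) [CommRing R] (n : ℕ) (v w : Fin (n + 1) → R) :
    Matrix (Fin (2 ^ (n + 1))) (Fin (2 ^ (n + 1))) R :=
  Matrix.reindex (pow2Equiv n) (pow2Equiv n)
    (Matrix.fromBlocks 0 (sus R n v w) (susBar R n v w) 0)

/-- The set of Suslin matrices of size `2 ^ m`. -/
def SuslinSet (R : Type) [CommRing R] (m : ℕ) : Set (Matrix (Fin (2 ^ m)) (Fin (2 ^ m)) R) :=
  {S | ∃ v w : Fin (m + 1) → R, S = sus R m v w}

/-- The image of the hyperbolic space `R^{m+1} ⊕ R^{m+1}` inside the Clifford algebra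
`M_{2^{m+1}}(R)`. -/
def PhiSet (R : Type) [CommRing R] (m : ℕ) :
    Set (Matrix (Fin (2 ^ (m + 1))) (Fin (2 ^ (m + 1))) R) :=
  {x | ∃ v w : Fin (m + 1) → R, x = phiMat R m v w}

/-- The block diagonal matrix `diag(g₁, g₂)`. -/
def diagBlock (R : Type) [CommRing R] (m : ℕ)
    (g₁ g₂ : Matrix (Fin (2 ^ m)) (Fin (2 ^ m)) R) :
    Matrix (Fin (2 ^ (m + 1))) (Fin (2 ^ (m + 1))) R :=
  Matrix.reindex (pow2Equiv m) (pow2Equiv m) (Matrix.fromBlocks g₁ 0 0 g₂)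

/-- `Spin_{2(m+1)}(R)`, as the set of pairs `(g₁, g₂)` such that `x = diag(g₁, g₂)`
satisfies `x · x* = 1` and conjugation by `x` maps the image of the hyperbolic space
onto itself. -/
def SpinPair (R : Type) [CommRing R] (m : ℕ) :
    Set (Matrix (Fin (2 ^ m)) (Fin (2 ^ m)) R × Matrix (Fin (2 ^ m)) (Fin (2 ^ m)) R) :=
  {p | IsUnit p.1 ∧ IsUnit p.2 ∧
    diagBlock R m p.1 p.2 * invol R (m + 1) (diagBlock R m p.1 p.2) = 1 ∧
    (fun y => diagBlock R m p.1 p.2 * y * (diagBlock R m p.1 p.2)⁻¹) '' PhiSet R m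
      = PhiSet R m}

/-- The group `G_m(R)` of `g ∈ GL_{2^m}(R)` such that `g · S · g*` is a Suslin matrix
for every Suslin matrix `S`. -/
def GSet (R : Type) [CommRing R] (m : ℕ) : Set (Matrix (Fin (2 ^ m)) (Fin (2 ^ m)) R) :=
  {g | IsUnit g ∧ ∀ S ∈ SuslinSet R m, g * S * invol R m g ∈ SuslinSet R m}

/-- The group `SG_m(R)` of `g ∈ G_m(R)` preserving the length `l(S(v,w)) = v ⬝ᵥ w`. -/
def SGSet (R : Type) [CommRing R] (m : ℕ) : Set (Matrix (Fin (2 ^ m)) (Fin (2 ^ m)) R) :=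
  {g | g ∈ GSet R m ∧ ∀ v w v' w' : Fin (m + 1) → R,
    g * sus R m v w * invol R m g = sus R m v' w' → v' ⬝ᵥ w' = v ⬝ᵥ w}

/-- The hyperbolic quadratic form `q(v, w) = v ⬝ᵥ w` on `R^n ⊕ R^n`. -/
def hypForm (R : Type) [CommRing R] (n : ℕ) :
    QuadraticForm R ((Fin n → R) × (Fin n → R)) :=
  LinearMap.BilinMap.toQuadraticMap
    (LinearMap.mk₂ R (fun x y => x.1 ⬝ᵥ y.2)
      (fun x x' y => by simp [add_dotProduct])
      (fun c x y => by simp [smul_dotProduct])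
      (fun x y y' => by simp [dotProduct_add])
      (fun x c y => by simp [dotProduct_smul]))

/-- `E_i = S_m(e_i, 0)`. -/
def Emat (R : Type) [CommRing R] (m : ℕ) (i : Fin (m + 1)) :
    Matrix (Fin (2 ^ m)) (Fin (2 ^ m)) R :=
  sus R m (Pi.single i 1) 0

/-- `F_i = S_m(0, e_i)`. -/
def Fmat (R : Type) [CommRing R] (m : ℕ) (i : Fin (m + 1)) :
    Matrix (Fin (2 ^ m)) (Fin (2 ^ m)) R :=
  sus R m 0 (Pi.single i 1)

/-! Write `M* = J_n · Mᵀ · J_nᵀ`. Since `J_{n+1}` is built from copies of `±J_n`, the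
involution acts on block matrices by
* `[[A, B], [C, D]]* = [[D*, -B*], [-C*, A*]]` if `n` is even, and
* `[[A, B], [C, D]]* = [[A*, -C*], [-B*, D*]]` if `n` is odd.

It fixes scalar matrices and commutes with transposition. As `S_{n+1} = [[a, S_n], [-S̄_n, b]]` and
`S̄_{n+1} = [[b, -S_n], [S̄_n, a]]`, the identity `S_n* = S_n` gives `S_{n+1}* = S̄_{n+1}`, and
`S_n* = S̄_n` gives `S_{n+1}* = S_{n+1}`. -/

section Blocks

variable {α : Type*} {n : ℕ}

/-- The matrix of size `2 ^ (n + 1)` with the given `2 × 2` block form, indexed as in `sus` and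
`Jmat`. -/
def pow2Blocks (A B C D : Matrix (Fin (2 ^ n)) (Fin (2 ^ n)) α) :
    Matrix (Fin (2 ^ (n + 1))) (Fin (2 ^ (n + 1))) α :=
  reindex (pow2Equiv n) (pow2Equiv n) (fromBlocks A B C D)

theorem pow2Blocks_transpose (A B C D : Matrix (Fin (2 ^ n)) (Fin (2 ^ n)) α) :
    (pow2Blocks A B C D)ᵀ = pow2Blocks Aᵀ Cᵀ Bᵀ Dᵀ := by
  simp only [pow2Blocks, transpose_reindex, fromBlocks_transpose]

theorem pow2Blocks_mul [NonUnitalNonAssocSemiring α]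
    (A B C D A' B' C' D' : Matrix (Fin (2 ^ n)) (Fin (2 ^ n)) α) :
    pow2Blocks A B C D * pow2Blocks A' B' C' D' =
      pow2Blocks (A * A' + B * C') (A * B' + B * D') (C * A' + D * C') (C * B' + D * D') := by
  simp only [pow2Blocks, reindex_apply, submatrix_mul_equiv, fromBlocks_multiply]

theorem pow2Blocks_one [Zero α] [One α] :
    pow2Blocks (1 : Matrix (Fin (2 ^ n)) (Fin (2 ^ n)) α) 0 0 1 = 1 := by
  simp only [pow2Blocks, fromBlocks_one, reindex_apply, submatrix_one_equiv]

end Blocks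

section Involution

variable {R : Type} [CommRing R] {n : ℕ}

theorem Jmat_succ_of_even (hn : Even n) :
    Jmat R (n + 1) = pow2Blocks 0 (Jmat R n) (-Jmat R n) 0 :=
  if_neg (Nat.not_even_iff_odd.mpr hn.add_one)

theorem Jmat_succ_of_odd (hn : Odd n) :
    Jmat R (n + 1) = pow2Blocks (Jmat R n) 0 0 (-Jmat R n) :=
  if_pos hn.add_one

theorem invol_succ_pow2Blocks_of_even (hn : Even n)
    (A B C D : Matrix (Fin (2 ^ n)) (Fin (2 ^ n)) R) :
    invol R (n + 1) (pow2Blocks A B C D) =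
      pow2Blocks (invol R n D) (-invol R n B) (-invol R n C) (invol R n A) := by
  simp [invol, Jmat_succ_of_even hn, pow2Blocks_transpose, pow2Blocks_mul]

theorem invol_succ_pow2Blocks_of_odd (hn : Odd n)
    (A B C D : Matrix (Fin (2 ^ n)) (Fin (2 ^ n)) R) :
    invol R (n + 1) (pow2Blocks A B C D) =
      pow2Blocks (invol R n A) (-invol R n C) (-invol R n B) (invol R n D) := by
  simp [invol, Jmat_succ_of_odd hn, pow2Blocks_transpose, pow2Blocks_mul]

theorem invol_transpose (M : Matrix (Fin (2 ^ n)) (Fin (2 ^ n)) R) :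
    invol R n Mᵀ = (invol R n M)ᵀ := by
  simp only [invol, transpose_mul, transpose_transpose, Matrix.mul_assoc]

theorem invol_neg (M : Matrix (Fin (2 ^ n)) (Fin (2 ^ n)) R) :
    invol R n (-M) = -invol R n M := by
  simp only [invol, transpose_neg, Matrix.mul_neg, Matrix.neg_mul]

theorem invol_smul (c : R) (M : Matrix (Fin (2 ^ n)) (Fin (2 ^ n)) R) :
    invol R n (c • M) = c • invol R n M := by
  simp only [invol, transpose_smul, Matrix.mul_smul, Matrix.smul_mul]

theorem invol_zero : invol R n 0 = 0 := by
  simp only [invol, transpose_zero, Matrix.mul_zero, Matrix.zero_mul]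

theorem invol_one : invol R n 1 = 1 := by
  induction n with
  | zero => simp [invol, Jmat]
  | succ n ih =>
    rw [← pow2Blocks_one]
    rcases Nat.even_or_odd n with hn | hn
    · rw [invol_succ_pow2Blocks_of_even hn, ih, invol_zero, neg_zero]
    · rw [invol_succ_pow2Blocks_of_odd hn, ih, invol_zero, neg_zero]

theorem invol_smul_one (c : R) : invol R n (c • 1) = c • 1 := by
  rw [invol_smul, invol_one]

end Involution

section Suslin

variable {R : Type} [CommRing R] {n : ℕ}

theorem sus_succ (v w : Fin (n + 2) → R) :
    sus R (n + 1) v w =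
      pow2Blocks (v 0 • 1) (sus R n (v ∘ Fin.succ) (w ∘ Fin.succ))
        (-susBar R n (v ∘ Fin.succ) (w ∘ Fin.succ)) (w 0 • 1) :=
  rfl

theorem susBar_succ (v w : Fin (n + 2) → R) :
    susBar R (n + 1) v w =
      pow2Blocks (w 0 • 1) (-sus R n (v ∘ Fin.succ) (w ∘ Fin.succ))
        (susBar R n (v ∘ Fin.succ) (w ∘ Fin.succ)) (v 0 • 1) := by
  simp only [susBar, sus_succ, pow2Blocks_transpose, transpose_neg, transpose_smul, transpose_one,
    transpose_transpose]

theorem invol_sus_succ_of_even (hn : Even n)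
    (ih : ∀ v w, invol R n (sus R n v w) = sus R n v w) (v w : Fin (n + 2) → R) :
    invol R (n + 1) (sus R (n + 1) v w) = susBar R (n + 1) v w := by
  have invol_susBar (v w : Fin (n + 1) → R) : invol R n (susBar R n v w) = susBar R n v w := by
    rw [susBar, invol_transpose, ih]
  rw [sus_succ, susBar_succ, invol_succ_pow2Blocks_of_even hn, invol_smul_one, invol_smul_one,
    invol_neg, neg_neg, invol_susBar, ih]

theorem invol_sus_succ_of_odd (hn : Odd n)
    (ih : ∀ v w, invol R n (sus R n v w) = susBar R n v w) (v w : Fin (n + 2) → R) :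
    invol R (n + 1) (sus R (n + 1) v w) = sus R (n + 1) v w := by
  have invol_susBar (v w : Fin (n + 1) → R) : invol R n (susBar R n v w) = sus R n v w := by
    rw [susBar, invol_transpose, ih, susBar, transpose_transpose]
  rw [sus_succ, invol_succ_pow2Blocks_of_odd hn, invol_smul_one, invol_smul_one,
    invol_neg, neg_neg, invol_susBar, ih]

end Suslin

/-- `J_n · S_n(v,w)ᵀ · J_nᵀ = S_n(v,w)` if `n` is even, and
`J_n · S_n(v,w)ᵀ · J_nᵀ = S̄_n(v,w)` if `n` is odd. -/
theorem Jmat_conj_suslin (R : Type) [CommRing R] (n : ℕ) (v w : Fin (n + 1) → R) :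
    Jmat R n * (sus R n v w)ᵀ * (Jmat R n)ᵀ =
      if Even n then sus R n v w else susBar R n v w := by
  change invol R n (sus R n v w) = _
  induction n with
  | zero => simp [invol, Jmat, sus]
  | succ n ih =>
    rcases Nat.even_or_odd n with hn | hn
    · rw [if_neg (Nat.not_even_iff_odd.mpr hn.add_one)]
      exact invol_sus_succ_of_even hn (fun v w ↦ (ih v w).trans (if_pos hn)) v w
    · rw [if_pos hn.add_one]
      exact invol_sus_succ_of_odd hn
        (fun v w ↦ (ih v w).trans (if_neg (Nat.not_even_iff_odd.mpr hn))) v w
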